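/- Fix n ≥ 1. For each i = 1, ..., m and j = 0, ..., n−1, the subspace 𝓛_{ij} (the closed linear span of {e_i z^{nk+j} : k ∈ ℕ}) is a minimal reducing subspace for T_{z^n} on H²_{ℂᵐ}(𝔻): 𝓛_{ij} is a nonzero reducing subspace for T_{z^n}, and every closed subspace N ⊆ 𝓛_{ij} that is a reducing subspace for T_{z^n} satisfies N = {0} or N = 𝓛_{ij}. -/

import Mathlib

noncomputable section

/-- The vector-valued Hardy space `H²_{ℂᵐ}(𝔻)`. -/
abbrev HardyVec (m : ℕ) : Type :=
  lp (fun _ : ℕ => EuclideanSpace ℂ (Fin m)) 2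

/-- The element `e_i z^p` of `H²_{ℂᵐ}(𝔻)`. -/
def eiz (m : ℕ) (i : Fin m) (p : ℕ) : HardyVec m :=
  lp.single 2 p (EuclideanSpace.single i (1 : ℂ))

/-- The subspace `𝓛_{ij}`: the closed linear span of `{e_i z^{nk+j} : k ∈ ℕ}`. -/
def Lsub (m n : ℕ) (i : Fin m) (j : Fin n) : Submodule ℂ (HardyVec m) :=
  (Submodule.span ℂ (Set.range fun k : ℕ => eiz m i (n * k + j))).topologicalClosure

theorem inner_eiz (m : ℕ) (i : Fin m) (p : ℕ) (x : HardyVec m) :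
    inner ℂ (eiz m i p) x = x p i := by
  unfold eiz
  rw [lp.inner_single_left]
  simp [EuclideanSpace.inner_single_left]

theorem shift_eiz (m n : ℕ) (T : HardyVec m →L[ℂ] HardyVec m)
    (hT : ∀ (F : HardyVec m) (k : ℕ), T F k = if k < n then 0 else F (k - n))
    (i : Fin m) (p : ℕ) : T (eiz m i p) = eiz m i (p + n) := by
  ext k l
  rw [hT]
  unfold eiz
  simp only [lp.single_apply, Pi.single_apply]
  split_ifs <;> first | rfl | (exfalso; omega)

theorem Lsub_le (m n : ℕ) (i : Fin m) (j : Fin n) (N : Submodule ℂ (HardyVec m))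
    (hN : IsClosed (N : Set (HardyVec m))) (h : ∀ k : ℕ, eiz m i (n * k + j) ∈ N) :
    Lsub m n i j ≤ N := by
  refine Submodule.topologicalClosure_minimal _ ?_ hN
  rw [Submodule.span_le]
  rintro _ ⟨k, rfl⟩
  exact h k

theorem eiz_mem (m n : ℕ) (i : Fin m) (j : Fin n) (k : ℕ) :
    eiz m i (n * k + j) ∈ Lsub m n i j :=
  Submodule.le_topologicalClosure _ (Submodule.subset_span ⟨k, rfl⟩)

theorem mem_Lsub_perp (m n : ℕ) (i : Fin m) (j : Fin n) (x : HardyVec m) :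
    x ∈ (Lsub m n i j)ᗮ ↔ ∀ k : ℕ, x (n * k + j) i = 0 := by
  constructor
  · intro h k
    rw [← inner_eiz]
    exact (Submodule.mem_orthogonal _ _).1 h _ (eiz_mem m n i j k)
  · intro h
    have h1 : Lsub m n i j ≤ (ℂ ∙ x)ᗮ := by
      refine Lsub_le m n i j _ (Submodule.isClosed_orthogonal _) fun k => ?_
      rw [Submodule.mem_orthogonal_singleton_iff_inner_left, inner_eiz, h]
    rw [Submodule.mem_orthogonal]
    intro u hu
    exact Submodule.mem_orthogonal_singleton_iff_inner_left.1 (h1 hu)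

theorem eiz_self (m : ℕ) (i : Fin m) (p : ℕ) : eiz m i p p i = 1 := by
  simp [eiz]

theorem eiz_ne (m : ℕ) (i : Fin m) (p q : ℕ) (h : q ≠ p) : eiz m i p q i = 0 := by
  simp [eiz, h]

/-- Each `𝓛_{ij}` is a minimal reducing subspace for `T_{z^n}` on `H²_{ℂᵐ}(𝔻)`: it is a nonzero
reducing subspace, and every closed subspace `N ⊆ 𝓛_{ij}` reducing for `T_{z^n}` is `{0}` or
`𝓛_{ij}`. -/
theorem Lsub_minimal_reducing (m n : ℕ) (hm : 1 ≤ m) (hn : 1 ≤ n)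
    (T : HardyVec m →L[ℂ] HardyVec m)
    (hT : ∀ (F : HardyVec m) (k : ℕ), T F k = if k < n then 0 else F (k - n))
    (i : Fin m) (j : Fin n) :
    Lsub m n i j ≠ ⊥ ∧
    (∀ x ∈ Lsub m n i j, T x ∈ Lsub m n i j) ∧
    (∀ x ∈ (Lsub m n i j)ᗮ, T x ∈ (Lsub m n i j)ᗮ) ∧
    (∀ N : Submodule ℂ (HardyVec m), IsClosed (N : Set (HardyVec m)) →
      N ≤ Lsub m n i j →
      (∀ x ∈ N, T x ∈ N) → (∀ x ∈ Nᗮ, T x ∈ Nᗮ) →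
      N = ⊥ ∨ N = Lsub m n i j) := by
  have hstep : ∀ k : ℕ, T (eiz m i (n * k + j)) = eiz m i (n * (k + 1) + j) := by
    intro k
    rw [shift_eiz m n T hT]
    congr 1
    ring
  have hT0 : ∀ x, T x j = 0 := by
    intro x
    rw [hT, if_pos j.2]
  have hclosed : IsClosed (Lsub m n i j : Set (HardyVec m)) :=
    Submodule.isClosed_topologicalClosure _
  have hall : ∀ N : Submodule ℂ (HardyVec m), IsClosed (N : Set (HardyVec m)) →
      (∀ x ∈ N, T x ∈ N) → eiz m i j ∈ N → Lsub m n i j ≤ N := by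
    intro N hN hTN h0
    refine Lsub_le m n i j N hN fun k => ?_
    induction k with
    | zero => simpa using h0
    | succ k ih => rw [← hstep]; exact hTN _ ih
  have he0 : eiz m i j ∈ Lsub m n i j := by simpa using eiz_mem m n i j 0
  refine ⟨?_, ?_, ?_, ?_⟩
  · intro h
    rw [h, Submodule.mem_bot] at he0
    have := eiz_self m i j
    rw [he0] at this
    simp at this
  · intro x hx
    have : Lsub m n i j ≤ (Lsub m n i j).comap T.toLinearMap := by
      refine Lsub_le m n i j _ (hclosed.preimage T.continuous) fun k => ?_
      change T _ ∈ Lsub m n i j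
      rw [hstep]
      exact eiz_mem m n i j _
    exact this hx
  · intro x hx
    rw [mem_Lsub_perp] at hx ⊢
    intro k
    cases k with
    | zero => simp [hT0]
    | succ k =>
      have h1 : ¬ (n * (k + 1) + (j : ℕ) < n) := by rw [mul_add]; omega
      have h2 : n * (k + 1) + (j : ℕ) - n = n * k + j := by rw [mul_add]; omega
      rw [hT, if_neg h1, h2, hx]
  · intro N hN hNL hTN hTN'
    have : CompleteSpace N := hN.completeSpace_coe
    obtain ⟨u, hu, v, hv, huv⟩ := Submodule.exists_add_mem_mem_orthogonal (K := N) (eiz m i j)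
    have huk : ∀ k : ℕ, u (n * (k + 1) + j) i = 0 := by
      intro k
      obtain ⟨a, ha, b, hb, hab⟩ :=
        Submodule.exists_add_mem_mem_orthogonal (K := N) (eiz m i (n * k + j))
      rw [← inner_eiz, ← hstep, hab, map_add, inner_add_left,
        Submodule.inner_left_of_mem_orthogonal hu (hTN' b hb), add_zero]
      have h1 : u = eiz m i j - v := by rw [huv]; abel
      rw [h1, inner_sub_right, Submodule.inner_right_of_mem_orthogonal (hTN a ha) hv, sub_zero,
        ← inner_conj_symm, inner_eiz, hT0]
      simp
    have hu0 : u = u j i • eiz m i j := by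
      rw [← sub_eq_zero]
      have h1 : u - u j i • eiz m i j ∈ Lsub m n i j :=
        Submodule.sub_mem _ (hNL hu) (Submodule.smul_mem _ _ he0)
      have h2 : u - u j i • eiz m i j ∈ (Lsub m n i j)ᗮ := by
        rw [mem_Lsub_perp]
        intro k
        rw [← inner_eiz, inner_sub_right, inner_smul_right, inner_eiz, inner_eiz]
        cases k with
        | zero => rw [mul_zero, zero_add, eiz_self, mul_one, sub_self]
        | succ k =>
          have h3 : n * (k + 1) + (j : ℕ) ≠ j := by rw [mul_add]; omega
          rw [huk, eiz_ne m i _ _ h3, mul_zero, sub_zero]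
      exact inner_self_eq_zero.1 (Submodule.inner_right_of_mem_orthogonal (𝕜 := ℂ) h1 h2)
    by_cases hc : u j i = 0
    · left
      rw [hc, zero_smul] at hu0
      rw [hu0, zero_add] at huv
      have h1 := hall Nᗮ (Submodule.isClosed_orthogonal _) hTN' (huv ▸ hv)
      rw [eq_bot_iff]
      intro x hx
      rw [Submodule.mem_bot]
      exact inner_self_eq_zero.1
        (Submodule.inner_right_of_mem_orthogonal (𝕜 := ℂ) hx (h1 (hNL hx)))
    · right
      refine le_antisymm hNL (hall N hN hTN ?_)
      rw [hu0] at hu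
      exact (Submodule.smul_mem_iff N hc).1 hu
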